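/- For every natural number n ≥ 1 and every real x, x^n - φ_{n-1}(x) = 2^{1-n} T_n(x). In particular, the truncation at k = n-1 recovers the optimal degree-(n-1) polynomial approximation of x^n, with supremum error 2^{1-n} over [-1, 1]. -/

import Mathlib

open Finset Polynomial

/-- Chebyshev coefficients of the monomial `x ^ n`. -/
noncomputable def chebCoeff (n j : ℕ) : ℝ :=
  if (n - j) % 2 = 0 then (2 : ℝ) ^ (1 - (n : ℤ)) * (n.choose ((n - j) / 2) : ℝ) else 0

/-- The truncated Chebyshev approximant `φ_k(x) = Σ'_{j=0}^{k} c_j T_j(x)`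
(the `j = 0` term halved). -/
noncomputable def phi (n k : ℕ) (x : ℝ) : ℝ :=
  chebCoeff n 0 / 2 * (Polynomial.Chebyshev.T ℝ (0 : ℤ)).eval x +
    ∑ j ∈ Finset.Icc 1 k, chebCoeff n j * (Polynomial.Chebyshev.T ℝ (j : ℤ)).eval x

/-!
Writing `2x = z + z⁻¹` turns `T_k` into `(z ^ k + z ^ (-k)) / 2`, so the binomial theorem suggests
`(2x) ^ n = Σ C(n, i) T_{n - 2i}`. Algebraically this is Pascal's rule together with
`2x T_k = T_{k+1} + T_{k-1}`, where `k` ranges over `ℤ`. Since `T_{-m} = T_m`, the terms with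
indices `±m` coincide; folding them together gives the Chebyshev expansion of `x ^ n`, with the
unpaired `m = 0` term counted only once, hence halved. Cutting the expansion at `n - 1` drops
exactly its top term `2 ^ (1 - n) T_n`, and `|T_n| ≤ 1` on `[-1, 1]` with equality at `1`.
-/

section

variable {R : Type*} [CommRing R]

theorem two_mul_X_mul_T (k : ℤ) :
    2 * X * Chebyshev.T R k = Chebyshev.T R (k + 1) + Chebyshev.T R (k - 1) := by
  rw [Chebyshev.T_add_one, sub_add_cancel]

theorem two_mul_X_pow_mul_T (n : ℕ) (k : ℤ) :
    (2 * X) ^ n * Chebyshev.T R k =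
      ∑ p ∈ antidiagonal n, (n.choose p.1 : R[X]) * Chebyshev.T R (k + (p.2 - p.1)) := by
  induction n generalizing k with
  | zero => simp
  | succ n ih =>
    rw [sum_antidiagonal_choose_succ_mul fun i j : ℕ ↦ Chebyshev.T R (k + (j - i)),
      pow_succ, mul_assoc, two_mul_X_mul_T, mul_add, ih, ih]
    congr 1 <;> refine sum_congr rfl fun p hp ↦ ?_
    · congr 2
      push_cast
      ring
    · rw [Nat.choose_symm_of_eq_add (mem_antidiagonal.mp hp).symm]
      congr 2
      push_cast
      ring

theorem two_mul_pow_eq_sum_choose_mul_eval_T (n : ℕ) (x : R) :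
    (2 * x) ^ n =
      ∑ p ∈ antidiagonal n, (n.choose p.1 : R) * (Chebyshev.T R (p.2 - p.1)).eval x := by
  simpa [eval_finsetSum] using congrArg (eval x) (two_mul_X_pow_mul_T (R := R) n 0)

end

theorem chebCoeff_self (n : ℕ) : chebCoeff n n = 2 ^ (1 - (n : ℤ)) := by
  simp [chebCoeff]

theorem chebCoeff_eq_zero_of_odd_sub {n j : ℕ} (h : Odd (n - j)) : chebCoeff n j = 0 :=
  if_neg (by grind)

theorem chebCoeff_natAbs_sub {n i j : ℕ} (h : i + j = n) :
    chebCoeff n ((j : ℤ) - i).natAbs = 2 ^ (1 - (n : ℤ)) * n.choose i := by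
  rw [chebCoeff, if_pos (by lia)]
  rcases le_total i j with hij | hji
  · rw [show (n - ((j : ℤ) - i).natAbs) / 2 = i by lia]
  · rw [show (n - ((j : ℤ) - i).natAbs) / 2 = j by lia, Nat.choose_symm_of_eq_add h.symm]

theorem sum_chebCoeff_natAbs_mul (n : ℕ) (f : ℤ → ℝ) :
    ∑ m ∈ Icc (-n : ℤ) n, chebCoeff n m.natAbs * f m =
      2 ^ (1 - (n : ℤ)) * ∑ p ∈ antidiagonal n, n.choose p.1 * f (p.2 - p.1) := by
  have h_inj : Set.InjOn (fun p : ℕ × ℕ ↦ (p.2 - p.1 : ℤ)) (antidiagonal n) := by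
    rintro ⟨i, j⟩ hp ⟨i', j'⟩ hp' heq
    simp only [mem_coe, HasAntidiagonal.mem_antidiagonal, Prod.mk.injEq] at *
    lia
  have h_mapsTo : Set.MapsTo (fun p : ℕ × ℕ ↦ (p.2 - p.1 : ℤ)) (antidiagonal n)
      (Icc (-n : ℤ) n) := by
    rintro ⟨i, j⟩ hp
    simp only [mem_coe, HasAntidiagonal.mem_antidiagonal, mem_Icc] at *
    lia
  have h_odd : ∀ m ∈ Icc (-n : ℤ) n,
      m ∉ (fun p : ℕ × ℕ ↦ (p.2 - p.1 : ℤ)) '' antidiagonal n → Odd (n - m.natAbs) := by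
    intro m hm hm_notMem
    by_contra h_not_odd
    refine hm_notMem ⟨(((n - m) / 2).toNat, ((n + m) / 2).toNat), ?_, ?_⟩
    · rw [mem_coe, HasAntidiagonal.mem_antidiagonal]
      grind
    · grind
  rw [mul_sum]
  refine (sum_of_injOn _ h_inj h_mapsTo (fun m hm hm_notMem ↦ ?_) fun p hp ↦ ?_).symm
  · rw [chebCoeff_eq_zero_of_odd_sub (h_odd m hm hm_notMem), zero_mul]
  · rw [chebCoeff_natAbs_sub (mem_antidiagonal.mp hp), mul_assoc]

theorem phi_succ (n k : ℕ) (x : ℝ) :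
    phi n (k + 1) x =
      phi n k x + chebCoeff n (k + 1) * (Chebyshev.T ℝ (k + 1 : ℕ)).eval x := by
  rw [phi, phi, sum_Icc_succ_top (by lia), add_assoc]

theorem two_mul_phi (n k : ℕ) (x : ℝ) :
    2 * phi n k x =
      ∑ m ∈ Icc (-k : ℤ) k, chebCoeff n m.natAbs * (Chebyshev.T ℝ m).eval x := by
  have h_even : (fun m : ℤ ↦ chebCoeff n m.natAbs * (Chebyshev.T ℝ m).eval x).Even :=
    fun m ↦ by simp only [Int.natAbs_neg, Chebyshev.T_neg]
  rw [sum_Icc_of_even_eq_range h_even, range_eq_Ico, sum_eq_sum_Ico_succ_bot (by lia), zero_add,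
    Ico_add_one_right_eq_Icc, phi]
  simp only [Int.natAbs_natCast, two_nsmul, Nat.cast_zero, Int.natAbs_zero]
  ring

theorem phi_self (n : ℕ) (x : ℝ) : phi n n x = x ^ n := by
  have h_two_pow : (2 : ℝ) ^ (1 - (n : ℤ)) * 2 ^ n = 2 := by
    rw [← zpow_natCast, ← zpow_add₀ two_ne_zero, sub_add_cancel, zpow_one]
  refine mul_left_cancel₀ (two_ne_zero (α := ℝ)) ?_
  calc 2 * phi n n x
      = 2 ^ (1 - (n : ℤ)) * (2 * x) ^ n := by
        rw [two_mul_phi, sum_chebCoeff_natAbs_mul, two_mul_pow_eq_sum_choose_mul_eval_T]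
    _ = 2 * x ^ n := by rw [mul_pow, ← mul_assoc, h_two_pow]

theorem pow_succ_sub_phi (n : ℕ) (x : ℝ) :
    x ^ (n + 1) - phi (n + 1) n x =
      2 ^ (1 - ((n + 1 : ℕ) : ℤ)) * (Chebyshev.T ℝ (n + 1 : ℕ)).eval x := by
  rw [← phi_self, phi_succ, add_sub_cancel_left, chebCoeff_self]

theorem iSup_abs_eval_T_Icc (n : ℤ) :
    ⨆ x : Set.Icc (-1 : ℝ) 1, |(Chebyshev.T ℝ n).eval (x : ℝ)| = 1 := by
  have h_greatest :
      IsGreatest (Set.range fun x : Set.Icc (-1 : ℝ) 1 ↦ |(Chebyshev.T ℝ n).eval (x : ℝ)|) 1 := by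
    refine ⟨⟨⟨1, by norm_num⟩, by simp⟩, Set.forall_mem_range.mpr fun x ↦ ?_⟩
    exact Chebyshev.abs_eval_T_real_le_one n (abs_le.mpr x.2)
  exact h_greatest.csSup_eq

/-- For `n ≥ 1`, `x^n - φ_{n-1}(x) = 2^(1-n) T_n(x)` for all real `x`; in particular the
supremum error of `φ_{n-1}` over `[-1, 1]` is `2^(1-n)`. -/
theorem truncation_at_n_sub_one (n : ℕ) (hn : 1 ≤ n) :
    (∀ x : ℝ, x ^ n - phi n (n - 1) x =
      (2 : ℝ) ^ (1 - (n : ℤ)) * (Polynomial.Chebyshev.T ℝ (n : ℤ)).eval x) ∧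
    (⨆ x : Set.Icc (-1 : ℝ) 1, |(x : ℝ) ^ n - phi n (n - 1) x|) = (2 : ℝ) ^ (1 - (n : ℤ)) := by
  have h_error : ∀ x : ℝ, x ^ n - phi n (n - 1) x =
      2 ^ (1 - (n : ℤ)) * (Chebyshev.T ℝ n).eval x := by
    obtain ⟨m, rfl⟩ := Nat.exists_eq_add_of_le' hn
    exact pow_succ_sub_phi m
  refine ⟨h_error, ?_⟩
  have h_pos : (0 : ℝ) < 2 ^ (1 - (n : ℤ)) := by positivity
  simp_rw [h_error, abs_mul, abs_of_pos h_pos]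
  rw [← Real.mul_iSup_of_nonneg h_pos.le, iSup_abs_eval_T_Icc, mul_one]
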